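/- arXiv:2404.06403 — 4 statements merged into one kernel-verified Lean document; each statement's English description precedes it below -/
import Mathlib

section
/- Let θ₁ and θ₂ be independent real Gaussian random variables with θ₁ ~ N(μ₁, σ₁²), θ₂ ~ N(μ₂, σ₂²), and σ₁² + σ₂² > 0. Set s = √(σ₁² + σ₂²) and α = (μ₁ − μ₂)/s. Then E[max(θ₁, θ₂)] = μ₁·Φ(α) + μ₂·Φ(−α) + s·φ(α), where Φ and φ are the cumulative distribution function and probability density function of the standard Gaussian N(0,1). -/
open MeasureTheory ProbabilityTheory Filter

/-- The cumulative distribution function of the standard Gaussian `N(0,1)`. -/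
noncomputable def stdGaussianCDF (x : ℝ) : ℝ :=
  ((gaussianReal 0 1) (Set.Iic x)).toReal

/-- The probability density function of the standard Gaussian `N(0,1)`. -/
noncomputable def stdGaussianPDF (x : ℝ) : ℝ :=
  Real.exp (-x ^ 2 / 2) / Real.sqrt (2 * Real.pi)

/-!
Since `max θ₁ θ₂ = θ₂ + max (θ₁ - θ₂) 0`, only the means and the law `N(m, v)` of the difference
matter, and it suffices to compute the mean of its positive part. Split the identity on `(0, ∞)`
into the constant `m`, which contributes `m` times a tail probability, and `x - m`, whose product
with the Gaussian density `f` is the derivative of `-v f`, so that its integral over `(0, ∞)` is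
`v f(0)`.
-/

open scoped NNReal Topology

section Density

variable (m : ℝ) (v : ℝ≥0)

lemma gaussianPDFReal_eq_stdGaussianPDF_div (x : ℝ) :
    gaussianPDFReal m v x = stdGaussianPDF ((x - m) / √v) / √v := by
  have h_exp : -((x - m) / √v) ^ 2 / 2 = -(x - m) ^ 2 / (2 * v) := by
    rw [div_pow, Real.sq_sqrt v.coe_nonneg]
    ring
  rw [gaussianPDFReal, stdGaussianPDF, h_exp, Real.sqrt_mul (by positivity)]
  ring

lemma stdGaussianPDF_neg (x : ℝ) : stdGaussianPDF (-x) = stdGaussianPDF x := by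
  rw [stdGaussianPDF, stdGaussianPDF, neg_sq]

lemma hasDerivAt_gaussianPDFReal (x : ℝ) :
    HasDerivAt (gaussianPDFReal m v) (-((x - m) / v) * gaussianPDFReal m v x) x := by
  have h_exponent : HasDerivAt (fun y ↦ -(y - m) ^ 2 / (2 * v)) (-((x - m) / v)) x :=
    ((((hasDerivAt_id x).sub_const m).fun_pow 2).fun_neg.div_const (2 * (v : ℝ))).congr_deriv
      (by simp only [id]; field)
  exact (h_exponent.exp.const_mul _).congr_deriv (by rw [gaussianPDFReal]; ring)

lemma tendsto_gaussianPDFReal_atTop : Tendsto (gaussianPDFReal m v) atTop (𝓝 0) := by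
  rcases eq_or_ne v 0 with rfl | hv
  · rw [gaussianPDFReal_zero_var]
    exact tendsto_const_nhds
  have h_sq : Tendsto (fun x ↦ (x - m) ^ 2) atTop atTop :=
    (tendsto_pow_atTop two_ne_zero).comp (tendsto_atTop_add_const_right _ (-m) tendsto_id)
  have h_exponent : Tendsto (fun x ↦ -(x - m) ^ 2 / (2 * v)) atTop atBot :=
    (tendsto_neg_atTop_atBot.comp h_sq).atBot_div_const (by positivity)
  simpa only [mul_zero] using! (Real.tendsto_exp_atBot.comp h_exponent).const_mul _

end Density

section Measure

variable {m : ℝ} {v : ℝ≥0}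

lemma integrable_gaussianReal_iff_integrable_smul {E : Type*} [NormedAddCommGroup E]
    [NormedSpace ℝ E] {f : ℝ → E} (hv : v ≠ 0) :
    Integrable f (gaussianReal m v) ↔ Integrable (fun x ↦ gaussianPDFReal m v x • f x) := by
  rw [gaussianReal_of_var_ne_zero m hv,
    integrable_withDensity_iff_integrable_smul' (measurable_gaussianPDF m v)
      (ae_of_all _ fun _ ↦ gaussianPDF_lt_top)]
  simp only [toReal_gaussianPDF]

lemma setIntegral_gaussianReal_eq_setIntegral_smul {E : Type*} [NormedAddCommGroup E]
    [NormedSpace ℝ E] {f : ℝ → E} (hv : v ≠ 0) (s : Set ℝ) :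
    ∫ x in s, f x ∂gaussianReal m v = ∫ x in s, gaussianPDFReal m v x • f x := by
  rw [gaussianReal_of_var_ne_zero m hv,
    setIntegral_withDensity_eq_setIntegral_toReal_smul' s (measurable_gaussianPDF m v)
      (ae_of_all _ fun _ ↦ gaussianPDF_lt_top)]
  simp only [toReal_gaussianPDF]

lemma integrable_fun_id_gaussianReal : Integrable (fun x ↦ x) (gaussianReal m v) :=
  (memLp_id_gaussianReal 1).integrable le_rfl

lemma setIntegral_Ioi_sub_mean_gaussianReal (hv : v ≠ 0) (a : ℝ) :
    ∫ x in Set.Ioi a, (x - m) ∂gaussianReal m v = v * gaussianPDFReal m v a := by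
  have h_int : Integrable (fun x ↦ gaussianPDFReal m v x • (x - m)) :=
    (integrable_gaussianReal_iff_integrable_smul hv).mp
      (integrable_fun_id_gaussianReal.sub (integrable_const m))
  have h_deriv (x : ℝ) : HasDerivAt (fun y ↦ -v * gaussianPDFReal m v y)
      (gaussianPDFReal m v x • (x - m)) x :=
    ((hasDerivAt_gaussianPDFReal m v x).const_mul (-v : ℝ)).congr_deriv
      (by rw [smul_eq_mul]; field)
  have h_lim : Tendsto (fun x ↦ -v * gaussianPDFReal m v x) atTop (𝓝 0) := by
    simpa only [mul_zero] using (tendsto_gaussianPDFReal_atTop m v).const_mul (-v : ℝ)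
  rw [setIntegral_gaussianReal_eq_setIntegral_smul hv,
    integral_Ioi_of_hasDerivAt_of_tendsto' (fun x _ ↦ h_deriv x) h_int.integrableOn h_lim]
  ring

variable (m v) in
lemma gaussianReal_map_const_sub_sqrt_mul :
    (gaussianReal 0 1).map (fun z ↦ m - √v * z) = gaussianReal m v := by
  have h_scale : (gaussianReal 0 1).map (fun z ↦ √v * z) = gaussianReal 0 v := by
    rw [gaussianReal_map_const_mul]
    congr 1
    · exact mul_zero _
    · ext
      simp
  rw [← Function.comp_def (fun y ↦ m - y), ← Measure.map_map (by fun_prop) (by fun_prop),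
    h_scale, gaussianReal_map_const_sub, sub_zero]

lemma gaussianReal_real_Ioi (hv : v ≠ 0) (a : ℝ) :
    (gaussianReal m v).real (Set.Ioi a) = stdGaussianCDF ((m - a) / √v) := by
  have := nullSingletonClass_gaussianReal (μ := 0) one_ne_zero
  have h_preimage : (fun z ↦ m - √v * z) ⁻¹' Set.Ioi a = Set.Iio ((m - a) / √v) := by
    ext z
    rw [Set.mem_preimage, Set.mem_Ioi, Set.mem_Iio, lt_div_iff₀' (by positivity), lt_sub_comm]
  rw [← gaussianReal_map_const_sub_sqrt_mul m v,
    map_measureReal_apply (by fun_prop) measurableSet_Ioi, h_preimage,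
    measureReal_congr Iio_ae_eq_Iic]
  rfl

lemma stdGaussianCDF_neg (x : ℝ) : stdGaussianCDF (-x) = 1 - stdGaussianCDF x := by
  have h_tail : (gaussianReal 0 1).real (Set.Ioi x) = stdGaussianCDF (-x) := by
    simpa using gaussianReal_real_Ioi (m := 0) one_ne_zero x
  rw [← h_tail, ← Set.compl_Iic, probReal_compl_eq_one_sub measurableSet_Iic]
  rfl

lemma integral_max_zero_gaussianReal (hv : v ≠ 0) :
    ∫ x, max x 0 ∂gaussianReal m v
      = m * stdGaussianCDF (m / √v) + √v * stdGaussianPDF (m / √v) := by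
  have h_indicator : (fun x : ℝ ↦ max x 0) = (Set.Ioi 0).indicator fun x ↦ (x - m) + m := by
    ext x
    rcases lt_or_ge 0 x with hx | hx
    · simp [hx, hx.le]
    · simp [hx]
  have h_density : v * gaussianPDFReal m v 0 = √v * stdGaussianPDF (m / √v) := by
    rw [gaussianPDFReal_eq_stdGaussianPDF_div, zero_sub, neg_div, stdGaussianPDF_neg,
      mul_div_left_comm, Real.div_sqrt, mul_comm]
  have h_centered : Integrable (fun x ↦ x - m) (gaussianReal m v) :=
    integrable_fun_id_gaussianReal.sub (integrable_const m)
  calc ∫ x, max x 0 ∂gaussianReal m v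
      = ∫ x in Set.Ioi 0, ((x - m) + m) ∂gaussianReal m v := by
        rw [h_indicator, integral_indicator measurableSet_Ioi]
    _ = v * gaussianPDFReal m v 0 + stdGaussianCDF (m / √v) * m := by
        rw [integral_add h_centered.integrableOn (integrable_const m),
          setIntegral_Ioi_sub_mean_gaussianReal hv, setIntegral_const, gaussianReal_real_Ioi hv,
          sub_zero, smul_eq_mul]
    _ = m * stdGaussianCDF (m / √v) + √v * stdGaussianPDF (m / √v) := by
        rw [h_density]
        ring

end Measure

section RandomVariables

variable {Ω : Type*} [MeasurableSpace Ω] {P : Measure Ω} {θ₁ θ₂ : Ω → ℝ}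

lemma hasLaw_sub_gaussianReal_of_indepFun {μ₁ μ₂ : ℝ} {v₁ v₂ : ℝ≥0}
    (h₁ : HasLaw θ₁ (gaussianReal μ₁ v₁) P) (h₂ : HasLaw θ₂ (gaussianReal μ₂ v₂) P)
    (hindep : IndepFun θ₁ θ₂ P) :
    HasLaw (θ₁ - θ₂) (gaussianReal (μ₁ - μ₂) (v₁ + v₂)) P where
  aemeasurable := h₁.aemeasurable.sub h₂.aemeasurable
  map_eq := by
    rw [sub_eq_add_neg, sub_eq_add_neg]
    exact gaussianReal_add_gaussianReal_of_indepFun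
      (hindep.comp measurable_id measurable_neg) h₁.map_eq (gaussianReal_neg h₂).map_eq

theorem stmt7_general {m : ℝ} {v : ℝ≥0} (hθ₂ : Integrable θ₂ P)
    (hlaw : HasLaw (θ₁ - θ₂) (gaussianReal m v) P) (hv : v ≠ 0) :
    ∫ ω, max (θ₁ ω) (θ₂ ω) ∂P
      = (∫ ω, θ₁ ω ∂P) * stdGaussianCDF (m / √v) + (∫ ω, θ₂ ω ∂P) * stdGaussianCDF (-(m / √v))
        + √v * stdGaussianPDF (m / √v) := by
  have hsub : Integrable (θ₁ - θ₂) P := hlaw.hasGaussianLaw.integrable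
  have h_mean : ∫ ω, θ₁ ω ∂P = (∫ ω, θ₂ ω ∂P) + m := by
    have h_mean_sub : ∫ ω, (θ₁ - θ₂) ω ∂P = m := hlaw.integral_eq.trans integral_id_gaussianReal
    rw [← h_mean_sub, ← integral_add hθ₂ hsub]
    simp only [Pi.sub_apply, add_sub_cancel]
  have h_posPart : ∫ ω, max ((θ₁ - θ₂) ω) 0 ∂P
      = m * stdGaussianCDF (m / √v) + √v * stdGaussianPDF (m / √v) :=
    (hlaw.integral_comp (f := fun x ↦ max x 0) (by fun_prop)).trans
      (integral_max_zero_gaussianReal hv)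
  calc ∫ ω, max (θ₁ ω) (θ₂ ω) ∂P
      = ∫ ω, (θ₂ ω + max ((θ₁ - θ₂) ω) 0) ∂P := by
        simp only [← max_add_add_left, Pi.sub_apply, add_sub_cancel, add_zero]
    _ = (∫ ω, θ₂ ω ∂P) + (m * stdGaussianCDF (m / √v) + √v * stdGaussianPDF (m / √v)) := by
        rw [integral_add hθ₂ hsub.pos_part, h_posPart]
    _ = _ := by
        rw [h_mean, stdGaussianCDF_neg]
        ring

end RandomVariables

/-- Clark's formula for the mean of the maximum of two independent Gaussians:
`E[max(θ₁, θ₂)] = μ₁·Φ(α) + μ₂·Φ(−α) + s·φ(α)` with `s = √(σ₁² + σ₂²)` and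
`α = (μ₁ − μ₂)/s`. -/
theorem stmt7
    {Ω : Type*} [MeasurableSpace Ω] (P : Measure Ω) [IsProbabilityMeasure P]
    (θ₁ θ₂ : Ω → ℝ) (hθ₁ : Measurable θ₁) (hθ₂ : Measurable θ₂)
    (μ₁ μ₂ : ℝ) (v₁ v₂ : NNReal)
    (hlaw₁ : Measure.map θ₁ P = gaussianReal μ₁ v₁)
    (hlaw₂ : Measure.map θ₂ P = gaussianReal μ₂ v₂)
    (hindep : IndepFun θ₁ θ₂ P)
    (hv : 0 < (v₁ : ℝ) + (v₂ : ℝ)) :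
    ∫ ω, max (θ₁ ω) (θ₂ ω) ∂P
      = μ₁ * stdGaussianCDF ((μ₁ - μ₂) / Real.sqrt ((v₁ : ℝ) + (v₂ : ℝ)))
        + μ₂ * stdGaussianCDF (-((μ₁ - μ₂) / Real.sqrt ((v₁ : ℝ) + (v₂ : ℝ))))
        + Real.sqrt ((v₁ : ℝ) + (v₂ : ℝ))
          * stdGaussianPDF ((μ₁ - μ₂) / Real.sqrt ((v₁ : ℝ) + (v₂ : ℝ))) := by
  have h₁ : HasLaw θ₁ (gaussianReal μ₁ v₁) P := ⟨hθ₁.aemeasurable, hlaw₁⟩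
  have h₂ : HasLaw θ₂ (gaussianReal μ₂ v₂) P := ⟨hθ₂.aemeasurable, hlaw₂⟩
  simpa only [h₁.integral_eq, h₂.integral_eq, integral_id_gaussianReal, NNReal.coe_add] using
    stmt7_general h₂.hasGaussianLaw.integrable (hasLaw_sub_gaussianReal_of_indepFun h₁ h₂ hindep)
      (by exact_mod_cast hv.ne')
end

section
/- Let L ≥ 1 be an integer, let p₁, …, p_L be nonnegative reals with ∑_{l=1}^L p_l = 1, let n₁, …, n_L be nonnegative integers, and for each l let α_l be a real with 1 ≤ α_l ≤ 1 + n_l. Define σ_l² = α_l(2 + n_l − α_l)/((2 + n_l)²(3 + n_l)) and σ² = ∑_{l=1}^L p_l² σ_l². Let C > 0 be such that (1/2)√(C/L) > 5. If n_l ≤ (1/2)√(C/L) for every l ∈ {1, …, L}, then σ² ≥ 1/C. -/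
/-!
Since `1 ≤ a ≤ 1 + n`, the product `a * (2 + n - a)` is smallest at the endpoints, so among
posteriors with `n` samples `Beta(1, 1 + n)` has the least variance. That least variance decreases
in `n`, so a leaf with at most `N` samples has variance at least that of `Beta(1, 1 + N)`, which is
at least `1 / (2 * N) ^ 2` once `N ≥ 4`. For `N = √(C / L) / 2` this is `L / C`, and Cauchy-Schwarz,
`1 ≤ L * ∑ l, p l ^ 2`, absorbs the factor `L`.
-/

/-- The variance of the `Beta(a, b)` posterior at a leaf with `n` observed samples, where
`a + b = 2 + n`; the second parameter is eliminated, and `n` is allowed to be real. -/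
noncomputable def betaPosteriorVariance (n a : ℝ) : ℝ :=
  a * (2 + n - a) / ((2 + n) ^ 2 * (3 + n))

theorem betaPosteriorVariance_one_le {n a : ℝ} (ha : a ∈ Set.Icc 1 (1 + n)) :
    betaPosteriorVariance n 1 ≤ betaPosteriorVariance n a := by
  obtain ⟨ha₁, ha₂⟩ := ha
  have hn : 0 ≤ n := by linarith
  have hprod : 1 * (2 + n - 1) ≤ a * (2 + n - a) := by
    linarith [mul_nonneg (sub_nonneg.2 ha₁) (sub_nonneg.2 ha₂)]
  unfold betaPosteriorVariance
  gcongr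

theorem antitoneOn_betaPosteriorVariance_one :
    AntitoneOn (fun n ↦ betaPosteriorVariance n 1) (Set.Ici 0) := by
  intro x (hx : 0 ≤ x) y (hy : 0 ≤ y) hxy
  have hdiff : (2 + x - 1) * ((2 + y) ^ 2 * (3 + y)) - (2 + y - 1) * ((2 + x) ^ 2 * (3 + x)) =
      (y - x) * ((x + y + x * y) * (x + y + 6) + (x + y + 4)) := by
    ring
  simp only [betaPosteriorVariance, one_mul]
  rw [div_le_div_iff₀ (by positivity) (by positivity), ← sub_nonneg, hdiff]
  exact mul_nonneg (sub_nonneg.2 hxy) (by positivity)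

theorem betaPosteriorVariance_one_le_of_le {n N a : ℝ} (ha : a ∈ Set.Icc 1 (1 + n))
    (hnN : n ≤ N) : betaPosteriorVariance N 1 ≤ betaPosteriorVariance n a := by
  have hn : 0 ≤ n := by linarith [ha.1.trans ha.2]
  exact (antitoneOn_betaPosteriorVariance_one hn (hn.trans hnN) hnN).trans
    (betaPosteriorVariance_one_le ha)

theorem one_div_sq_le_betaPosteriorVariance_one {N : ℝ} (hN : 4 ≤ N) :
    1 / (2 * N) ^ 2 ≤ betaPosteriorVariance N 1 := by
  -- The cubic is the difference of the cross products; its largest root is about 3.13.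
  have hcubic : 0 ≤ 3 * N ^ 3 - 3 * N ^ 2 - 16 * N - 12 := by
    obtain ⟨t, ht, rfl⟩ := exists_nonneg_add_of_le hN
    ring_nf
    positivity
  rw [betaPosteriorVariance, div_le_div_iff₀ (by positivity) (by positivity)]
  linarith

theorem mul_sq_sum_le_card_mul_sum_sq_mul {ι R : Type*} [CommRing R] [LinearOrder R]
    [IsStrictOrderedRing R] {s : Finset ι} {p v : ι → R} {c : R} (hc : 0 ≤ c)
    (hv : ∀ i ∈ s, c ≤ v i) :
    c * (∑ i ∈ s, p i) ^ 2 ≤ s.card * ∑ i ∈ s, p i ^ 2 * v i :=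
  calc
    c * (∑ i ∈ s, p i) ^ 2 ≤ c * (s.card * ∑ i ∈ s, p i ^ 2) := by
      gcongr
      exact sq_sum_le_card_mul_sum_sq
    _ = s.card * ∑ i ∈ s, p i ^ 2 * c := by rw [← Finset.sum_mul]; ring
    _ ≤ s.card * ∑ i ∈ s, p i ^ 2 * v i := by
      gcongr with i hi
      exact hv i hi

theorem stmt13_general {ι : Type*} [Fintype ι] {p n α : ι → ℝ} {C : ℝ}
    (hp : ∑ l, p l = 1) (hα : ∀ l, α l ∈ Set.Icc 1 (1 + n l))
    (hC : 4 ≤ 1 / 2 * √(C / Fintype.card ι))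
    (hn : ∀ l, n l ≤ 1 / 2 * √(C / Fintype.card ι)) :
    1 / C ≤ ∑ l, p l ^ 2 * betaPosteriorVariance (n l) (α l) := by
  set N := 1 / 2 * √(C / Fintype.card ι) with hN
  have hratio : 0 < C / Fintype.card ι := Real.sqrt_pos.1 (by linarith)
  have hcard : (0 : ℝ) < Fintype.card ι :=
    (Nat.cast_nonneg _).lt_of_ne fun h ↦ by simp [← h] at hratio
  have hNsq : (2 * N) ^ 2 = C / Fintype.card ι := by
    rw [hN, ← mul_assoc, mul_one_div_cancel two_ne_zero, one_mul, Real.sq_sqrt hratio.le]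
  have hmin : 1 / (2 * N) ^ 2 ≤ betaPosteriorVariance N 1 :=
    one_div_sq_le_betaPosteriorVariance_one hC
  have hsum : betaPosteriorVariance N 1 ≤
      Fintype.card ι * ∑ l, p l ^ 2 * betaPosteriorVariance (n l) (α l) := by
    simpa only [hp, one_pow, mul_one, Finset.card_univ] using
      mul_sq_sum_le_card_mul_sum_sq_mul (s := Finset.univ) (p := p)
        (le_trans (by positivity) hmin)
        fun l _ ↦ betaPosteriorVariance_one_le_of_le (hα l) (hn l)
  refine le_of_mul_le_mul_left ?_ hcard
  calc
    Fintype.card ι * (1 / C) = 1 / (2 * N) ^ 2 := by rw [hNsq, one_div_div, mul_one_div]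
    _ ≤ Fintype.card ι * ∑ l, p l ^ 2 * betaPosteriorVariance (n l) (α l) := hmin.trans hsum

/-- Posterior-variance lower bound (Lemma 5): if a probability vector `p` over `L` leaves,
Beta posterior parameters `1 ≤ α l ≤ 1 + n l` at each leaf, and sample counts
`n l ≤ (1/2)√(C/L)` with `(1/2)√(C/L) > 5` and `C > 0`, then the aggregated posterior
variance `∑ l, (p l)² · α l (2 + n l − α l)/((2 + n l)²(3 + n l))` is at least `1/C`. -/
theorem stmt13 (L : ℕ) (hL : 1 ≤ L)
    (p : Fin L → ℝ) (hp : ∀ l, 0 ≤ p l) (hpsum : ∑ l, p l = 1)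
    (n : Fin L → ℕ) (α : Fin L → ℝ)
    (hα1 : ∀ l, 1 ≤ α l) (hα2 : ∀ l, α l ≤ 1 + (n l : ℝ))
    (C : ℝ) (hC : 0 < C)
    (hC5 : 5 < (1 / 2) * Real.sqrt (C / (L : ℝ)))
    (hn : ∀ l, (n l : ℝ) ≤ (1 / 2) * Real.sqrt (C / (L : ℝ))) :
    1 / C ≤ ∑ l, (p l) ^ 2 *
      (α l * (2 + (n l : ℝ) - α l) / ((2 + (n l : ℝ)) ^ 2 * (3 + (n l : ℝ)))) := by
  exact stmt13_general hpsum (fun l ↦ ⟨hα1 l, hα2 l⟩)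
    (by rw [Fintype.card_fin]; linarith) (by simpa only [Fintype.card_fin] using hn)
end

section
/- Let θ₁ and θ₂ be independent real Gaussian random variables with θ₁ ~ N(μ₁, σ₁²) and θ₂ ~ N(μ₂, σ₂²), where μ₁, μ₂ ∈ [0, 1] and σ₂ > 0. Let C > 0 and suppose σ₂² ≥ |μ₁ − μ₂|/C. Then P[θ₂ ≥ θ₁] ≥ (1/2)·erfc(√(C/2)). -/
open MeasureTheory ProbabilityTheory

/-- The complementary error function `erfc x = (2/√π) ∫_x^∞ e^{-u²} du`. -/
noncomputable def erfc (x : ℝ) : ℝ :=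
  (2 / Real.sqrt Real.pi) * ∫ u in Set.Ioi x, Real.exp (-u ^ 2)

/-!
The difference `θ₂ - θ₁` is Gaussian with mean `μ₂ - μ₁` and variance `v = v₁ + v₂`, so
`P[θ₁ ≤ θ₂] = (1/2) erfc((μ₁ - μ₂) / √(2v))`, and since `erfc` is antitone it is enough that
`μ₁ - μ₂ ≤ √(C v)`. When the gap is at most `1`, a floor on the variance that is linear in the gap
suffices for this, because `x ≤ √x` for `x ≤ 1`.
-/

lemma gaussianPDFReal_zero_half (u : ℝ) :
    gaussianPDFReal 0 (1 / 2) u = (√Real.pi)⁻¹ * Real.exp (-u ^ 2) := by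
  have hvar : 2 * ((1 / 2 : NNReal) : ℝ) = 1 := by norm_num
  rw [gaussianPDFReal_def]
  simp only [mul_right_comm _ Real.pi, hvar, one_mul, sub_zero, div_one]

lemma gaussianReal_zero_half_real_Ici (x : ℝ) :
    (gaussianReal 0 (1 / 2)).real (Set.Ici x) = 1 / 2 * erfc x := by
  have hnonneg : 0 ≤ ∫ u in Set.Ici x, gaussianPDFReal 0 (1 / 2) u :=
    integral_nonneg fun u ↦ gaussianPDFReal_nonneg 0 (1 / 2) u
  rw [measureReal_def, gaussianReal_apply_eq_integral 0 (by norm_num),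
    ENNReal.toReal_ofReal hnonneg, integral_Ici_eq_integral_Ioi]
  simp only [gaussianPDFReal_zero_half, integral_const_mul, erfc]
  ring

lemma erfc_antitone : Antitone erfc := fun x y hxy ↦ by
  have htail := measureReal_mono (μ := gaussianReal 0 (1 / 2)) (Set.Ici_subset_Ici.2 hxy)
  simp only [gaussianReal_zero_half_real_Ici] at htail
  linarith

lemma hasLaw_sqrt_two_mul_mul_add_gaussianReal (μ : ℝ) (v : NNReal) :
    HasLaw (fun u ↦ √(2 * v) * u + μ) (gaussianReal μ v) (gaussianReal 0 (1 / 2)) := by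
  have hvar : NNReal.mk (√(2 * v) ^ 2) (sq_nonneg _) * (1 / 2) = v := by
    ext
    rw [NNReal.coe_mul, NNReal.coe_mk, Real.sq_sqrt (by positivity)]
    push_cast
    ring
  have hlaw := gaussianReal_add_const (gaussianReal_const_mul
    (HasLaw.id (μ := gaussianReal 0 (1 / 2))) √(2 * v)) μ
  rwa [mul_zero, zero_add, hvar] at hlaw

lemma gaussianReal_real_Ici (μ x : ℝ) {v : NNReal} (hv : v ≠ 0) :
    (gaussianReal μ v).real (Set.Ici x) = 1 / 2 * erfc ((x - μ) / √(2 * v)) := by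
  have hscale : 0 < √(2 * (v : ℝ)) := by positivity
  have hpre : {u | x ≤ √(2 * v) * u + μ} = Set.Ici ((x - μ) / √(2 * v)) := by
    ext u
    rw [Set.mem_ofPred_eq, Set.mem_Ici, div_le_iff₀' hscale, sub_le_iff_le_add]
  rw [← gaussianReal_zero_half_real_Ici, ← hpre]
  exact ((hasLaw_sqrt_two_mul_mul_add_gaussianReal μ v).measureReal_eq measurableSet_Ici).symm

lemma le_sqrt_mul_of_div_le {x C s : ℝ} (hx : x ≤ 1) (hC : 0 < C) (h : x / C ≤ s) :
    x ≤ √(C * s) :=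
  (Real.le_sqrt_self_iff.2 hx).trans (Real.sqrt_le_sqrt ((div_le_iff₀' hC).1 h))

section IndependentGaussians

variable {Ω : Type*} {mΩ : MeasurableSpace Ω} {P : Measure Ω} {X Y : Ω → ℝ}
  {μ₁ μ₂ : ℝ} {v₁ v₂ : NNReal}

lemma hasLaw_sub_gaussianReal_of_indepFun_s14 (hX : HasLaw X (gaussianReal μ₁ v₁) P)
    (hY : HasLaw Y (gaussianReal μ₂ v₂) P) (hXY : IndepFun X Y P) :
    HasLaw (X - Y) (gaussianReal (μ₁ - μ₂) (v₁ + v₂)) P := by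
  have hneg : IndepFun X (-Y) P := hXY.comp measurable_id measurable_neg
  refine ⟨hX.aemeasurable.sub hY.aemeasurable, ?_⟩
  rw [sub_eq_add_neg, sub_eq_add_neg]
  exact gaussianReal_add_gaussianReal_of_indepFun hneg hX.map_eq (gaussianReal_neg hY).map_eq

lemma measureReal_le_eq_half_erfc_of_indepFun (hX : HasLaw X (gaussianReal μ₁ v₁) P)
    (hY : HasLaw Y (gaussianReal μ₂ v₂) P) (hXY : IndepFun X Y P) (hv : v₁ + v₂ ≠ 0) :
    P.real {ω | X ω ≤ Y ω} = 1 / 2 * erfc ((μ₁ - μ₂) / √(2 * (v₁ + v₂))) := by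
  have hlaw := hasLaw_sub_gaussianReal_of_indepFun_s14 hY hX hXY.symm
  rw [add_comm v₂ v₁] at hlaw
  calc P.real {ω | X ω ≤ Y ω}
      = P.real {ω | 0 ≤ (Y - X) ω} := by simp only [Pi.sub_apply, sub_nonneg]
    _ = (gaussianReal (μ₂ - μ₁) (v₁ + v₂)).real (Set.Ici 0) :=
        hlaw.measureReal_eq measurableSet_Ici
    _ = 1 / 2 * erfc ((μ₁ - μ₂) / √(2 * (v₁ + v₂))) := by
        rw [gaussianReal_real_Ici _ _ hv, zero_sub, neg_sub, NNReal.coe_add]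

theorem stmt14_general (hX : HasLaw X (gaussianReal μ₁ v₁) P)
    (hY : HasLaw Y (gaussianReal μ₂ v₂) P) (hXY : IndepFun X Y P) (hv : v₁ + v₂ ≠ 0)
    {C : ℝ} (hgap : μ₁ - μ₂ ≤ √(C * (v₁ + v₂))) :
    1 / 2 * erfc √(C / 2) ≤ P.real {ω | X ω ≤ Y ω} := by
  have hscale : 0 < √(2 * (v₁ + v₂ : ℝ)) := by
    have : (0 : ℝ) < v₁ + v₂ := by exact_mod_cast pos_iff_ne_zero.2 hv
    positivity
  have hthreshold : (μ₁ - μ₂) / √(2 * (v₁ + v₂)) ≤ √(C / 2) := by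
    rw [div_le_iff₀ hscale, ← Real.sqrt_mul' _ (by positivity)]
    rwa [show C / 2 * (2 * (v₁ + v₂)) = C * (v₁ + v₂) by ring]
  rw [measureReal_le_eq_half_erfc_of_indepFun hX hY hXY hv]
  exact mul_le_mul_of_nonneg_left (erfc_antitone hthreshold) (by norm_num)

end IndependentGaussians

/-- For independent Gaussians `θ₁ ~ N(μ₁, v₁)`, `θ₂ ~ N(μ₂, σ₂²)` with `μ₁, μ₂ ∈ [0,1]`,
`σ₂ > 0`, `C > 0` and `σ₂² ≥ |μ₁ − μ₂|/C`, we have `P[θ₂ ≥ θ₁] ≥ (1/2)·erfc(√(C/2))`. -/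
theorem stmt14
    {Ω : Type*} [MeasurableSpace Ω] (P : Measure Ω) [IsProbabilityMeasure P]
    (θ₁ θ₂ : Ω → ℝ) (hθ₁ : Measurable θ₁) (hθ₂ : Measurable θ₂)
    (μ₁ μ₂ : ℝ) (hμ₁0 : 0 ≤ μ₁) (hμ₁1 : μ₁ ≤ 1) (hμ₂0 : 0 ≤ μ₂) (hμ₂1 : μ₂ ≤ 1)
    (v₁ : NNReal) (σ₂ : ℝ) (hσ₂ : 0 < σ₂)
    (hlaw₁ : Measure.map θ₁ P = gaussianReal μ₁ v₁)
    (hlaw₂ : Measure.map θ₂ P = gaussianReal μ₂ (σ₂ ^ 2).toNNReal)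
    (hindep : IndepFun θ₁ θ₂ P)
    (C : ℝ) (hC : 0 < C)
    (hfloor : |μ₁ - μ₂| / C ≤ σ₂ ^ 2) :
    (1 / 2) * erfc (Real.sqrt (C / 2)) ≤ (P {ω | θ₁ ω ≤ θ₂ ω}).toReal := by
  have hgap : (μ₁ - μ₂) / C ≤ v₁ + (σ₂ ^ 2).toNNReal := calc
    (μ₁ - μ₂) / C ≤ |μ₁ - μ₂| / C := by gcongr; exact le_abs_self _
    _ ≤ v₁ + (σ₂ ^ 2).toNNReal :=
      hfloor.trans (le_add_of_nonneg_of_le v₁.2 (Real.le_coe_toNNReal _))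
  exact stmt14_general ⟨hθ₁.aemeasurable, hlaw₁⟩ ⟨hθ₂.aemeasurable, hlaw₂⟩ hindep (by positivity)
    (le_sqrt_mul_of_div_le (by linarith) hC hgap)
end

section
/- Let n ≥ 1 be an integer, let a₁, …, a_n be reals, and for each j let (μ_j(t)) and (σ_j(t)) be sequences with σ_j(t) ≥ 0, μ_j(t) → a_j and σ_j(t) → 0 as t → ∞ (with the relevant combined variances positive for every t). Define recursively the nested Clark approximation: (m_n(t), v_n(t)) = (μ_n(t), σ_n(t)²), and for j = n−1 down to 1, letting s = √(σ_j(t)² + v_{j+1}(t)) and α = (μ_j(t) − m_{j+1}(t))/s, set m_j(t) = μ_j(t)Φ(α) + m_{j+1}(t)Φ(−α) + sφ(α) and v_j(t) = (μ_j(t)² + σ_j(t)²)Φ(α) + (m_{j+1}(t)² + v_{j+1}(t))Φ(−α) + (μ_j(t) + m_{j+1}(t))sφ(α) − m_j(t)². Then m_1(t) → max(a₁, …, a_n) and v_1(t) → 0 as t → ∞. -/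
open MeasureTheory ProbabilityTheory Filter

/-- One step of Clark's moment-matching approximation: given (mean, variance) pairs
`p` and `q` of two independent Gaussians, return the (mean, variance) pair of (the Gaussian
approximation of) their maximum. -/
noncomputable def clarkStep (p q : ℝ × ℝ) : ℝ × ℝ :=
  let s := Real.sqrt (p.2 + q.2)
  let α := (p.1 - q.1) / s
  let m := p.1 * stdGaussianCDF α + q.1 * stdGaussianCDF (-α) + s * stdGaussianPDF α
  (m, (p.1 ^ 2 + p.2) * stdGaussianCDF α + (q.1 ^ 2 + q.2) * stdGaussianCDF (-α)
        + (p.1 + q.1) * s * stdGaussianPDF α - m ^ 2)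

/-- The nested (right-to-left) pairwise Clark approximation of the maximum of a list of
Gaussian (mean, variance) pairs: `(m_n, v_n)` is the last pair, and
`(m_j, v_j) = clarkStep (μ_j, σ_j²) (m_{j+1}, v_{j+1})`. -/
noncomputable def clarkFold : List (ℝ × ℝ) → ℝ × ℝ
  | [] => (0, 0)
  | [x] => x
  | x :: y :: xs => clarkStep x (clarkFold (y :: xs))

/-!
A Clark step with means `p`, `q` and combined standard deviation `s` weights `p` by `Φ(α)` and `q`
by `Φ(-α) = 1 - Φ(α)`, where `α = (p - q) / s`, up to the correction `s φ(α)`, which vanishes with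
`s` because `φ` is bounded. If `p → A`, `q → B` and `s → 0⁺`, then for `A ≠ B` the argument `α`
diverges and all the weight moves to the larger mean; for `A = B` the weights need not converge, but
they average two quantities with a common limit. So the first two moments tend to `max A B` and
`(max A B) ^ 2`, hence the variance to `0`, and the nested recursion follows by induction.
-/

open scoped Topology

lemma cdf_neg_eq_one_sub_cdf (ν : Measure ℝ) [IsProbabilityMeasure ν] [ν.IsNegInvariant]
    [NullSingletonClass ν] (x : ℝ) : cdf ν (-x) = 1 - cdf ν x := by
  calc cdf ν (-x) = ν.real (Set.Ici x) := by
        rw [cdf_eq_real, ← Set.neg_Ici, ← Set.neg_preimage, measureReal_def,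
          Measure.measure_preimage_neg, measureReal_def]
    _ = ν.real (Set.Iic x)ᶜ := by rw [Set.compl_Iic, measureReal_congr Ioi_ae_eq_Ici]
    _ = 1 - cdf ν x := by rw [probReal_compl_eq_one_sub measurableSet_Iic, cdf_eq_real]

instance isNegInvariant_gaussianReal_zero (v : NNReal) : (gaussianReal 0 v).IsNegInvariant where
  neg_eq_self := by rw [Measure.neg, Measure.map_congr (by rfl), gaussianReal_map_neg, neg_zero]

lemma stdGaussianCDF_eq_cdf : stdGaussianCDF = cdf (gaussianReal 0 1) := by
  funext x
  exact (cdf_eq_real _ x).symm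

lemma stdGaussianCDF_nonneg (x : ℝ) : 0 ≤ stdGaussianCDF x := ENNReal.toReal_nonneg

lemma stdGaussianCDF_add_stdGaussianCDF_neg (x : ℝ) :
    stdGaussianCDF x + stdGaussianCDF (-x) = 1 := by
  have : NullSingletonClass (gaussianReal 0 1) := nullSingletonClass_gaussianReal one_ne_zero
  rw [stdGaussianCDF_eq_cdf, cdf_neg_eq_one_sub_cdf, add_sub_cancel]

lemma tendsto_stdGaussianCDF_atTop : Tendsto stdGaussianCDF atTop (𝓝 1) :=
  stdGaussianCDF_eq_cdf ▸ tendsto_cdf_atTop _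

lemma tendsto_stdGaussianCDF_atBot : Tendsto stdGaussianCDF atBot (𝓝 0) :=
  stdGaussianCDF_eq_cdf ▸ tendsto_cdf_atBot _

lemma stdGaussianPDF_nonneg (x : ℝ) : 0 ≤ stdGaussianPDF x := by
  unfold stdGaussianPDF
  positivity

lemma stdGaussianPDF_le_stdGaussianPDF_zero (x : ℝ) : stdGaussianPDF x ≤ stdGaussianPDF 0 := by
  unfold stdGaussianPDF
  exact div_le_div_of_nonneg_right (Real.exp_le_exp.2 (by linarith [sq_nonneg x])) (by positivity)

section Limits

variable {T : Type*} {l : Filter T}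

lemma tendsto_mul_add_mul_of_add_eq_one {f g w w' : T → ℝ} {c : ℝ} (hf : Tendsto f l (𝓝 c))
    (hg : Tendsto g l (𝓝 c)) (hw : ∀ t, 0 ≤ w t) (hw' : ∀ t, 0 ≤ w' t)
    (hadd : ∀ t, w t + w' t = 1) : Tendsto (fun t => f t * w t + g t * w' t) l (𝓝 c) := by
  have hmin : Tendsto (fun t => min (f t) (g t)) l (𝓝 c) := by simpa using hf.min hg
  have hmax : Tendsto (fun t => max (f t) (g t)) l (𝓝 c) := by simpa using hf.max hg
  refine tendsto_of_tendsto_of_tendsto_of_le_of_le hmin hmax (fun t => ?_) (fun t => ?_)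
  · simpa [mul_comm] using Convex.min_le_combo (f t) (g t) (hw t) (hw' t) (hadd t)
  · simpa [mul_comm] using Convex.combo_le_max (f t) (g t) (hw t) (hw' t) (hadd t)

lemma tendsto_mul_stdGaussianPDF {s : T → ℝ} (hs : Tendsto s l (𝓝 0)) (α : T → ℝ) :
    Tendsto (fun t => s t * stdGaussianPDF (α t)) l (𝓝 0) := by
  simp only [mul_comm (s _)]
  refine bdd_le_mul_tendsto_zero' (stdGaussianPDF 0) (.of_forall fun t => ?_) hs
  rw [abs_of_nonneg (stdGaussianPDF_nonneg _)]
  exact stdGaussianPDF_le_stdGaussianPDF_zero _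

lemma tendsto_mul_stdGaussianCDF_add_mul_neg_atTop {f g α : T → ℝ} {F G : ℝ}
    (hf : Tendsto f l (𝓝 F)) (hg : Tendsto g l (𝓝 G)) (hα : Tendsto α l atTop) :
    Tendsto (fun t => f t * stdGaussianCDF (α t) + g t * stdGaussianCDF (-α t)) l (𝓝 F) := by
  have hone := tendsto_stdGaussianCDF_atTop.comp hα
  have hzero := tendsto_stdGaussianCDF_atBot.comp (tendsto_neg_atTop_atBot.comp hα)
  simpa using (hf.mul hone).add (hg.mul hzero)

/-- Writing the limits of `f` and `g` as values of `h` makes them agree when `A = B`; the means are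
the case `h = id`, the second moments the case `h = (· ^ 2)`. -/
lemma tendsto_mul_stdGaussianCDF_add_mul_neg_max (h : ℝ → ℝ) {p q s f g : T → ℝ} {A B : ℝ}
    (hp : Tendsto p l (𝓝 A)) (hq : Tendsto q l (𝓝 B)) (hs : Tendsto s l (𝓝[>] 0))
    (hf : Tendsto f l (𝓝 (h A))) (hg : Tendsto g l (𝓝 (h B))) :
    Tendsto (fun t => f t * stdGaussianCDF ((p t - q t) / s t)
      + g t * stdGaussianCDF (-((p t - q t) / s t))) l (𝓝 (h (max A B))) := by
  have hinv : Tendsto (fun t => (s t)⁻¹) l atTop := hs.inv_tendsto_nhdsGT_zero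
  rcases lt_trichotomy A B with hAB | rfl | hBA
  · have hα : Tendsto (fun t => -((p t - q t) / s t)) l atTop := by
      simp only [← neg_div, neg_sub]
      exact (hq.sub hp).pos_mul_atTop (sub_pos.2 hAB) hinv
    rw [max_eq_right hAB.le]
    simpa only [neg_neg, add_comm] using tendsto_mul_stdGaussianCDF_add_mul_neg_atTop hg hf hα
  · rw [max_self]
    exact tendsto_mul_add_mul_of_add_eq_one hf hg (fun _ => stdGaussianCDF_nonneg _)
      (fun _ => stdGaussianCDF_nonneg _) (fun _ => stdGaussianCDF_add_stdGaussianCDF_neg _)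
  · have hα : Tendsto (fun t => (p t - q t) / s t) l atTop :=
      (hp.sub hq).pos_mul_atTop (sub_pos.2 hBA) hinv
    rw [max_eq_left hBA.le]
    exact tendsto_mul_stdGaussianCDF_add_mul_neg_atTop hf hg hα

lemma tendsto_clarkStep {p q : T → ℝ × ℝ} {A B : ℝ} (hp : Tendsto p l (𝓝 (A, 0)))
    (hq : Tendsto q l (𝓝 (B, 0))) (hpos : ∀ᶠ t in l, 0 < (p t).2 + (q t).2) :
    Tendsto (fun t => clarkStep (p t) (q t)) l (𝓝 (max A B, 0)) := by
  have hs : Tendsto (fun t => √((p t).2 + (q t).2)) l (𝓝 0) := by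
    simpa using (hp.snd_nhds.add hq.snd_nhds).sqrt
  have hs_pos : Tendsto (fun t => √((p t).2 + (q t).2)) l (𝓝[>] 0) :=
    tendsto_nhdsWithin_iff.2 ⟨hs, hpos.mono fun _ => Real.sqrt_pos.2⟩
  have hcorr := tendsto_mul_stdGaussianPDF hs
    fun t => ((p t).1 - (q t).1) / √((p t).2 + (q t).2)
  have hmoment {x : T → ℝ × ℝ} {c : ℝ} (hx : Tendsto x l (𝓝 (c, 0))) :
      Tendsto (fun t => (x t).1 ^ 2 + (x t).2) l (𝓝 (c ^ 2)) := by
    simpa using (hx.fst_nhds.pow 2).add hx.snd_nhds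
  have hmean : Tendsto (fun t => (clarkStep (p t) (q t)).1) l (𝓝 (max A B)) := by
    simpa [clarkStep] using (tendsto_mul_stdGaussianCDF_add_mul_neg_max id hp.fst_nhds hq.fst_nhds
      hs_pos hp.fst_nhds hq.fst_nhds).add hcorr
  have hsecond := (tendsto_mul_stdGaussianCDF_add_mul_neg_max (· ^ 2) hp.fst_nhds hq.fst_nhds hs_pos
    (hmoment hp) (hmoment hq)).add ((hp.fst_nhds.add hq.fst_nhds).mul hcorr)
  have hvar : Tendsto (fun t => (clarkStep (p t) (q t)).2) l (𝓝 0) := by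
    simpa [clarkStep, mul_assoc] using hsecond.sub (hmean.pow 2)
  exact hmean.prodMk_nhds hvar

end Limits

lemma ofFn_fin_succ_eq_cons {α : Type*} (n : ℕ) (x : ℕ → α) :
    List.ofFn (fun i : Fin (n + 1) => x i) = x 0 :: List.ofFn fun i : Fin n => x (i + 1) := by
  simp [List.ofFn_succ]

lemma clarkFold_cons (p : ℝ × ℝ) {L : List (ℝ × ℝ)} (hL : L ≠ []) :
    clarkFold (p :: L) = clarkStep p (clarkFold L) := by
  obtain ⟨q, L, rfl⟩ := List.exists_cons_of_ne_nil hL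
  rfl

lemma sup'_range_succ_eq_sup {α : Type*} [SemilatticeSup α] {n : ℕ}
    (hn : (Finset.range n).Nonempty) (a : ℕ → α) :
    (Finset.range (n + 1)).sup' Finset.nonempty_range_add_one a =
      a 0 ⊔ (Finset.range n).sup' hn fun j => a (j + 1) := by
  rw [Finset.sup'_congr _ (Finset.range_add_one' n) fun _ _ => rfl,
    Finset.sup'_insert hn.map, Finset.sup'_map]
  rfl

theorem stmt17_general {T : Type*} {l : Filter T} (n : ℕ) (hn : 1 ≤ n) (a : ℕ → ℝ)
    (x : ℕ → T → ℝ × ℝ) (hx : ∀ j < n, Tendsto (x j) l (𝓝 (a j, 0)))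
    (hpos : ∀ j, j + 1 < n → ∀ᶠ t in l,
      0 < (x j t).2 + (clarkFold ((List.ofFn fun i : Fin n => x i t).drop (j + 1))).2) :
    Tendsto (fun t => clarkFold (List.ofFn fun i : Fin n => x i t)) l
      (𝓝 ((Finset.range n).sup'
        (Finset.nonempty_range_iff.mpr (Nat.one_le_iff_ne_zero.mp hn)) a, 0)) := by
  induction n, hn using Nat.le_induction generalizing a x with
  | base => simpa [clarkFold] using hx 0 one_pos
  | succ n hn ih =>
    have hcons (t : T) := ofFn_fin_succ_eq_cons n (x · t)
    simp only [hcons, List.drop_succ_cons] at hpos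
    have htail := ih (fun j => a (j + 1)) (fun j => x (j + 1))
      (fun j hj => hx (j + 1) (by lia)) (fun j hj => hpos (j + 1) (by lia))
    have hne (t : T) : List.ofFn (fun i : Fin n => x (i + 1) t) ≠ [] := by
      simpa [List.ofFn_eq_nil_iff] using Nat.one_le_iff_ne_zero.mp hn
    simp only [hcons, clarkFold_cons _ (hne _),
      sup'_range_succ_eq_sup (Finset.nonempty_range_iff.mpr (Nat.one_le_iff_ne_zero.mp hn))]
    exact tendsto_clarkStep (hx 0 (by lia)) htail (hpos 0 (by lia))

/-- Inductive step of Lemma 4: if `μ_j(t) → a_j` and `σ_j(t) → 0` (with the combined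
variances appearing in the recursion positive for every `t`), then the nested Clark
approximation `(m_1(t), v_1(t))` of the maximum of the `n` Gaussians satisfies
`m_1(t) → max_j a_j` and `v_1(t) → 0`. -/
theorem stmt17 (n : ℕ) (hn : 1 ≤ n)
    (a : ℕ → ℝ) (μ σ : ℕ → ℕ → ℝ)
    (hσnonneg : ∀ j, j < n → ∀ t, 0 ≤ σ j t)
    (hμ : ∀ j, j < n → Tendsto (fun t => μ j t) atTop (nhds (a j)))
    (hσ : ∀ j, j < n → Tendsto (fun t => σ j t) atTop (nhds 0))
    (hpos : ∀ t : ℕ, ∀ j : ℕ, j + 1 < n →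
      0 < (σ j t) ^ 2 +
        (clarkFold ((List.ofFn (fun i : Fin n => (μ (i : ℕ) t, (σ (i : ℕ) t) ^ 2))).drop
          (j + 1))).2) :
    Tendsto
        (fun t => (clarkFold (List.ofFn (fun i : Fin n => (μ (i : ℕ) t, (σ (i : ℕ) t) ^ 2)))).1)
        atTop
        (nhds ((Finset.range n).sup'
          (Finset.nonempty_range_iff.mpr (Nat.one_le_iff_ne_zero.mp hn)) a)) ∧
    Tendsto
        (fun t => (clarkFold (List.ofFn (fun i : Fin n => (μ (i : ℕ) t, (σ (i : ℕ) t) ^ 2)))).2)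
        atTop (nhds 0) := by
  have h := stmt17_general n hn a (fun j t => (μ j t, σ j t ^ 2))
    (fun j hj => (hμ j hj).prodMk_nhds (by simpa using (hσ j hj).pow 2))
    (fun j hj => .of_forall (hpos · j hj))
  exact ⟨h.fst_nhds, h.snd_nhds⟩
end
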